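/- Let K be a finite geometric simplicial complex in ℝⁿ and let u, v be vertices of K. Then u and v lie in the same path component of the space |K| if and only if v is reachable from u in the 1-skeleton graph G(K). -/

import Mathlib

open Geometry

namespace PaperAlg

/-- Points of `ℝⁿ`. -/
abbrev Pt (n : ℕ) := EuclideanSpace ℝ (Fin n)

variable {n : ℕ}

/-- The 1-skeleton graph of a geometric simplicial complex `K`: its vertex set is the set of
vertices of `K`, and two vertices are adjacent iff they form an edge (a two-element face) of `K`. -/
def skeletonGraph (K : SimplicialComplex ℝ (Pt n)) : SimpleGraph K.vertices where
  Adj u v := (u : Pt n) ≠ (v : Pt n) ∧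
    ∃ s ∈ K.faces, (s : Set (Pt n)) = {(u : Pt n), (v : Pt n)}
  symm := by
    constructor
    rintro u v ⟨hne, s, hs, hset⟩
    exact ⟨fun h => hne h.symm, s, hs, by rw [hset, Set.pair_comm]⟩
  loopless := by constructor; rintro u ⟨hne, -⟩; exact hne rfl

/-- `K` is 2-dimensional: every face has at most three elements. -/
def TwoDimensional (K : SimplicialComplex ℝ (Pt n)) : Prop :=
  ∀ s ∈ K.faces, s.card ≤ 3

/-- The set of triangles (three-element faces) of `K` containing the finset `e`. -/
def trianglesContaining (K : SimplicialComplex ℝ (Pt n)) (e : Finset (Pt n)) :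
    Set (Finset (Pt n)) :=
  {t | t ∈ K.faces ∧ t.card = 3 ∧ e ⊆ t}

/-- An edge of `K` contained in exactly one triangle. -/
def IsBoundaryEdge (K : SimplicialComplex ℝ (Pt n)) (e : Finset (Pt n)) : Prop :=
  e ∈ K.faces ∧ e.card = 2 ∧ (trianglesContaining K e).ncard = 1

/-- An edge of `K` contained in exactly two triangles. -/
def IsInteriorEdge (K : SimplicialComplex ℝ (Pt n)) (e : Finset (Pt n)) : Prop :=
  e ∈ K.faces ∧ e.card = 2 ∧ (trianglesContaining K e).ncard = 2

/-- The closed upper half-plane `{(a, b) ∈ ℝ² : b ≥ 0}`. -/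
def HalfPlane : Set (ℝ × ℝ) := {p | 0 ≤ p.2}

/-- `x` has a neighborhood in `|K|` homeomorphic to an open subset of `ℝ²`. -/
def HasPlanarNbhd (K : SimplicialComplex ℝ (Pt n)) (x : Pt n) : Prop :=
  ∃ U : Set (Pt n), U ⊆ K.space ∧ U ∈ nhdsWithin x K.space ∧
    ∃ V : Set (ℝ × ℝ), IsOpen V ∧ Nonempty (↥U ≃ₜ ↥V)

/-- `x` has a neighborhood in `|K|` homeomorphic to an open subset of the closed half-plane. -/
def HasHalfPlanarNbhd (K : SimplicialComplex ℝ (Pt n)) (x : Pt n) : Prop :=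
  ∃ U : Set (Pt n), U ⊆ K.space ∧ U ∈ nhdsWithin x K.space ∧
    ∃ V : Set ↥HalfPlane, IsOpen V ∧ Nonempty (↥U ≃ₜ ↥V)

/-- `x` is a locally planar point of `|K|`. -/
def IsLocallyPlanarPt (K : SimplicialComplex ℝ (Pt n)) (x : Pt n) : Prop :=
  x ∈ K.space ∧ (HasPlanarNbhd K x ∨ HasHalfPlanarNbhd K x)

/-- `K` is locally planar if every point of `|K|` is locally planar. -/
def LocallyPlanar (K : SimplicialComplex ℝ (Pt n)) : Prop :=
  ∀ x ∈ K.space, IsLocallyPlanarPt K x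

/-- The vertices `a` of `K` such that `{v, a}` is an edge of `K`. -/
def linkVertices (K : SimplicialComplex ℝ (Pt n)) (v : Pt n) : Set (Pt n) :=
  {a | a ≠ v ∧ ∃ s ∈ K.faces, (s : Set (Pt n)) = {v, a}}

/-- The link graph `L(v)`: vertices are the `a` with `{v, a}` an edge of `K`, and `a`, `b`
are adjacent iff `{v, a, b}` is a triangle of `K`. -/
def linkGraph (K : SimplicialComplex ℝ (Pt n)) (v : Pt n) :
    SimpleGraph (linkVertices K v) where
  Adj a b := (a : Pt n) ≠ (b : Pt n) ∧
    ∃ t ∈ K.faces, t.card = 3 ∧ (t : Set (Pt n)) = {v, (a : Pt n), (b : Pt n)}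
  symm := by
    constructor
    rintro a b ⟨hne, t, ht, hc, hset⟩
    exact ⟨fun h => hne h.symm, t, ht, hc, by rw [hset, Set.pair_comm]⟩
  loopless := by constructor; rintro a ⟨hne, -⟩; exact hne rfl

/-- The vertices of `K` lying on some boundary edge. -/
def boundaryVertices (K : SimplicialComplex ℝ (Pt n)) : Set (Pt n) :=
  {v | ∃ e, IsBoundaryEdge K e ∧ v ∈ e}

/-- The boundary graph of `K`: the simple graph formed by the boundary edges of `K`
and their endpoints. -/
def boundaryGraph (K : SimplicialComplex ℝ (Pt n)) :
    SimpleGraph (boundaryVertices K) where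
  Adj u v := (u : Pt n) ≠ (v : Pt n) ∧
    ∃ e, IsBoundaryEdge K e ∧ (e : Set (Pt n)) = {(u : Pt n), (v : Pt n)}
  symm := by
    constructor
    rintro u v ⟨hne, e, he, hset⟩
    exact ⟨fun h => hne h.symm, e, he, by rw [hset, Set.pair_comm]⟩
  loopless := by constructor; rintro u ⟨hne, -⟩; exact hne rfl

/-- The Euler characteristic `χ(K) = V - E + F`. -/
noncomputable def eulerChar (K : SimplicialComplex ℝ (Pt n)) : ℤ :=
  (K.vertices.ncard : ℤ)
    - ({e : Finset (Pt n) | e ∈ K.faces ∧ e.card = 2}.ncard : ℤ)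
    + ({t : Finset (Pt n) | t ∈ K.faces ∧ t.card = 3}.ncard : ℤ)

/-- The three directed edges induced on its boundary by the cyclic ordering `(a, b, c)`. -/
def triDirs (o : Pt n × Pt n × Pt n) : Set (Pt n × Pt n) :=
  {(o.1, o.2.1), (o.2.1, o.2.2), (o.2.2, o.1)}

/-- `K` is orientable: one can assign to each triangle a cyclic ordering of its vertices so
that the two triangles containing any interior edge induce opposite directions on it. -/
def Orientable (K : SimplicialComplex ℝ (Pt n)) : Prop :=
  ∃ ori : Finset (Pt n) → Pt n × Pt n × Pt n,
    (∀ t ∈ K.faces, t.card = 3 →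
      (t : Set (Pt n)) = {(ori t).1, (ori t).2.1, (ori t).2.2}) ∧
    (∀ t₁ ∈ K.faces, ∀ t₂ ∈ K.faces, t₁.card = 3 → t₂.card = 3 → t₁ ≠ t₂ →
      ∀ e ∈ K.faces, e.card = 2 → e ⊆ t₁ → e ⊆ t₂ →
      ∀ x y : Pt n, x ∈ e → y ∈ e → x ≠ y →
        (x, y) ∈ triDirs (ori t₁) → (y, x) ∈ triDirs (ori t₂))

/-- The genus of a topological space `X`: the supremum of the numbers `m` for which there exist
`m` pairwise disjoint subsets of `X`, each homeomorphic to the circle `S¹`, whose union has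
connected complement. -/
noncomputable def genus (X : Type*) [TopologicalSpace X] : ℕ :=
  sSup {m : ℕ | ∃ C : Fin m → Set X,
    (Pairwise fun i j => Disjoint (C i) (C j)) ∧
    (∀ i, Nonempty (↥(C i) ≃ₜ ↥(Metric.sphere (0 : EuclideanSpace ℝ (Fin 2)) 1))) ∧
    IsConnected (⋃ i, C i)ᶜ}

theorem reach_of_face (K : SimplicialComplex ℝ (Pt n)) {s : Finset (Pt n)} (hs : s ∈ K.faces)
    {a b : Pt n} (ha : a ∈ K.vertices) (hb : b ∈ K.vertices) (has : a ∈ s) (hbs : b ∈ s) :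
    (skeletonGraph K).Reachable ⟨a, ha⟩ ⟨b, hb⟩ := by
  classical
  by_cases h : a = b
  · subst h; exact SimpleGraph.Reachable.refl _
  · refine SimpleGraph.Adj.reachable ⟨h, {a, b}, ?_, by simp⟩
    refine K.down_closed hs ?_ (by simp)
    intro x hx
    simp only [Finset.mem_insert, Finset.mem_singleton] at hx
    rcases hx with rfl | rfl <;> assumption

theorem joined_of_adj (K : SimplicialComplex ℝ (Pt n)) {a b : K.vertices}
    (h : (skeletonGraph K).Adj a b) : JoinedIn K.space (a : Pt n) b := by
  obtain ⟨-, s, hs, hset⟩ := h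
  have hj : JoinedIn (convexHull ℝ (s : Set (Pt n))) (a : Pt n) b := by
    have ha : (a : Pt n) ∈ convexHull ℝ (s : Set (Pt n)) :=
      subset_convexHull ℝ _ (by rw [hset]; simp)
    have hb : (b : Pt n) ∈ convexHull ℝ (s : Set (Pt n)) :=
      subset_convexHull ℝ _ (by rw [hset]; simp)
    exact ((convex_convexHull ℝ _).isPathConnected ⟨_, ha⟩).joinedIn _ ha _ hb
  exact hj.mono (fun x hx => SimplicialComplex.mem_space_iff.2 ⟨s, hs, hx⟩)

theorem mem_vertices_of_mem (K : SimplicialComplex ℝ (Pt n)) {s : Finset (Pt n)}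
    (hs : s ∈ K.faces) {a : Pt n} (ha : a ∈ s) : a ∈ K.vertices :=
  K.down_closed hs (Finset.singleton_subset_iff.2 ha) (Finset.singleton_nonempty _)

/-- two vertices lie in the same path component of `|K|` iff they are
reachable from one another in the 1-skeleton graph. -/
theorem joinedIn_space_iff_reachable (K : SimplicialComplex ℝ (Pt n))
    (hfin : K.faces.Finite) (u v : Pt n) (hu : u ∈ K.vertices) (hv : v ∈ K.vertices) :
    JoinedIn K.space u v ↔ (skeletonGraph K).Reachable ⟨u, hu⟩ ⟨v, hv⟩ := by
  constructor
  · intro hj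
    let P : Finset (Pt n) → Prop := fun s =>
      ∃ w, ∃ hw : w ∈ K.vertices, w ∈ s ∧ (skeletonGraph K).Reachable ⟨u, hu⟩ ⟨w, hw⟩
    have hclosed : ∀ Q : Finset (Pt n) → Prop,
        IsClosed (⋃ s ∈ {s | s ∈ K.faces ∧ Q s}, convexHull ℝ (s : Set (Pt n))) := by
      intro Q
      refine Set.Finite.isClosed_biUnion (hfin.subset fun s hs => hs.1) ?_
      intro s _
      exact (s.finite_toSet.isCompact_convexHull ℝ).isClosed
    by_contra hcon
    obtain ⟨γ, hγ⟩ := hj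
    have hpre : IsPreconnected (Set.range γ) := isPreconnected_range γ.continuous
    have key := isPreconnected_closed_iff.1 hpre _ _ (hclosed P) (hclosed fun s => ¬ P s)
      ?_ ⟨u, ⟨0, γ.source⟩, ?_⟩ ⟨v, ⟨1, γ.target⟩, ?_⟩
    · obtain ⟨x, -, hx1, hx2⟩ := key
      simp only [Set.mem_iUnion, Set.mem_setOf_eq, exists_prop] at hx1 hx2
      obtain ⟨s, ⟨hs, w, hw, hws, hr⟩, hxs⟩ := hx1
      obtain ⟨t, ⟨ht, hPt⟩, hxt⟩ := hx2
      have hx := K.inter_subset_convexHull hs ht ⟨hxs, hxt⟩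
      obtain ⟨y, hy⟩ := convexHull_nonempty_iff.1 ⟨x, hx⟩
      have hyv := mem_vertices_of_mem K hs hy.1
      exact hPt ⟨y, hyv, hy.2, hr.trans (reach_of_face K hs hw hyv hws hy.1)⟩
    · rintro _ ⟨τ, rfl⟩
      obtain ⟨s, hs, hx⟩ := SimplicialComplex.mem_space_iff.1 (hγ τ)
      by_cases hP : P s
      · exact Or.inl (Set.mem_biUnion (show s ∈ {s | s ∈ K.faces ∧ P s} from ⟨hs, hP⟩) hx)
      · exact Or.inr (Set.mem_biUnion (show s ∈ {s | s ∈ K.faces ∧ ¬ P s} from ⟨hs, hP⟩) hx)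
    · refine Set.mem_biUnion (show {u} ∈ {s | s ∈ K.faces ∧ P s} from
        ⟨hu, u, hu, by simp, SimpleGraph.Reachable.refl _⟩) (by simp)
    · refine Set.mem_biUnion (show {v} ∈ {s | s ∈ K.faces ∧ ¬ P s} from
        ⟨hv, ?_⟩) (by simp)
      rintro ⟨w, hw, hwv, hr⟩
      obtain rfl := Finset.mem_singleton.1 hwv
      exact hcon hr
  · rintro ⟨p⟩
    have main : ∀ a b : K.vertices, (skeletonGraph K).Walk a b →
        JoinedIn K.space (a : Pt n) b := by
      intro a b p
      induction p with
      | nil => exact JoinedIn.refl (SimplicialComplex.vertices_subset_space (Subtype.property _))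
      | cons h _ ih => exact (joined_of_adj K h).trans ih
    exact main _ _ p

end PaperAlg
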